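/- arXiv:math/0512345 — 2 statements merged into one kernel-verified Lean document; each statement's English description precedes it below -/
import Mathlib

section
/- Let β < 0 and let f be a non-constant unbounded solution of equation (1) on [t₀, ∞) satisfying condition (2), such that f is positive at infinity (i.e. f(t) > 0 for all sufficiently large t). Then f'(t)·f(t)^{−β} converges as t → ∞ to a finite limit l₀ with l₀ > 0. -/
/-!
The equation is linear in `f''` with integrating factor `exp (∫ f)` and source `β f'²` of constant
sign, so `f''` has a constant sign near infinity. As `f' → 0` and `f` is unbounded above, this
forces `f'' ≤ 0 < f'` and `f → ∞`. Where `f'' + f' = 0` the derivative of `f'' + f'` is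
`f' (f + β f' - 1) > 0`, so eventually `|f''| ≤ f'`. Hence the flux `A = f'' + f f'`, which
satisfies `A' = (1 + β) f'²`, is equivalent to `f f'`, and the derivative of
`log A - (1 + β) log f` is `O(f' / f²)`, which is integrable. So `A f ^ (-(1 + β))` converges to a
positive limit, and it is equivalent to `f' f ^ (-β)`.
-/

open Set Filter Topology Asymptotics MeasureTheory

section Calculus

variable {g g' h h' p q : ℝ → ℝ} {l : ℝ}

lemma eventually_monotoneOn_Ici_of_hasDerivAt_nonneg
    (hg : ∀ᶠ t in atTop, HasDerivAt g (g' t) t) (hg' : ∀ᶠ t in atTop, 0 ≤ g' t) :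
    ∀ᶠ T in atTop, MonotoneOn g (Ici T) := by
  filter_upwards [eventually_forall_ge_atTop.2 hg, eventually_forall_ge_atTop.2 hg'] with T hT hT'
  refine monotoneOn_of_hasDerivWithinAt_nonneg (f' := g') (convex_Ici T)
    (fun t ht => (hT t ht).continuousAt.continuousWithinAt) (fun t ht => ?_) fun t ht => ?_
  · exact (hT t (interior_subset ht)).hasDerivWithinAt
  · exact hT' t (interior_subset ht)

lemma eventually_antitoneOn_Ici_of_hasDerivAt_nonpos
    (hg : ∀ᶠ t in atTop, HasDerivAt g (g' t) t) (hg' : ∀ᶠ t in atTop, g' t ≤ 0) :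
    ∀ᶠ T in atTop, AntitoneOn g (Ici T) := by
  have hneg := eventually_monotoneOn_Ici_of_hasDerivAt_nonneg
    (hg.mono fun t ht => ht.fun_neg) (hg'.mono fun t ht => neg_nonneg.2 ht)
  exact hneg.mono fun T hT s hs t ht hst => neg_le_neg_iff.1 (hT hs ht hst)

lemma frequently_deriv_pos_of_not_isBoundedUnder_le
    (hg : ∀ᶠ t in atTop, HasDerivAt g (g' t) t) (hunb : ¬ IsBoundedUnder (· ≤ ·) atTop g) :
    ∃ᶠ t in atTop, 0 < g' t := by
  intro hnot
  obtain ⟨T, hT⟩ := (eventually_antitoneOn_Ici_of_hasDerivAt_nonpos hg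
    (hnot.mono fun t ht => not_lt.1 ht)).exists
  refine hunb (isBoundedUnder_of_eventually_le (a := g T) ?_)
  filter_upwards [eventually_ge_atTop T] with t ht
  exact hT self_mem_Ici ht ht

lemma eventually_deriv_pos_of_deriv2_nonpos_of_not_isBoundedUnder_le {g'' : ℝ → ℝ}
    (hg : ∀ᶠ t in atTop, HasDerivAt g (g' t) t) (hg' : ∀ᶠ t in atTop, HasDerivAt g' (g'' t) t)
    (hg'' : ∀ᶠ t in atTop, g'' t ≤ 0) (hunb : ¬ IsBoundedUnder (· ≤ ·) atTop g) :
    ∀ᶠ t in atTop, 0 < g' t := by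
  obtain ⟨T, hanti⟩ := (eventually_antitoneOn_Ici_of_hasDerivAt_nonpos hg' hg'').exists
  filter_upwards [eventually_ge_atTop T] with t ht
  obtain ⟨s, hs, hts⟩ := ((frequently_deriv_pos_of_not_isBoundedUnder_le hg
    hunb).and_eventually (eventually_ge_atTop t)).exists
  exact hs.trans_le (hanti ht (ht.trans hts) hts)

lemma tendsto_atTop_of_hasDerivAt_nonneg_of_not_isBoundedUnder_le
    (hg : ∀ᶠ t in atTop, HasDerivAt g (g' t) t) (hg' : ∀ᶠ t in atTop, 0 ≤ g' t)
    (hunb : ¬ IsBoundedUnder (· ≤ ·) atTop g) : Tendsto g atTop atTop := by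
  obtain ⟨T, hT⟩ := (eventually_monotoneOn_Ici_of_hasDerivAt_nonneg hg hg').exists
  refine tendsto_atTop.2 fun M => ?_
  have hfreq : ∃ᶠ t in atTop, M < g t := fun hnot =>
    hunb (isBoundedUnder_of_eventually_le (hnot.mono fun t ht => not_lt.1 ht))
  obtain ⟨s, hMs, hTs⟩ := (hfreq.and_eventually (eventually_ge_atTop T)).exists
  filter_upwards [eventually_ge_atTop s] with t ht
  exact hMs.le.trans (hT hTs (hTs.trans ht) ht)

lemma eventually_nonneg_of_hasDerivAt_pos_of_eq_zero
    (hg : ∀ᶠ t in atTop, HasDerivAt g (g' t) t) (hg' : ∀ᶠ t in atTop, g t = 0 → 0 < g' t)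
    (hfreq : ∃ᶠ t in atTop, 0 ≤ g t) : ∀ᶠ t in atTop, 0 ≤ g t := by
  obtain ⟨T, hT⟩ := eventually_atTop.1 (hg.and hg')
  obtain ⟨s, hs, hTs⟩ := (hfreq.and_eventually (eventually_ge_atTop T)).exists
  filter_upwards [eventually_ge_atTop s] with t ht
  have hderiv : ∀ x ∈ Icc s t, HasDerivAt g (g' x) x := fun x hx => (hT x (hTs.trans hx.1)).1
  exact image_le_of_deriv_right_lt_deriv_boundary' continuousOn_const
    (fun x _ => hasDerivWithinAt_const x (Ici x) (0 : ℝ)) hs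
    (fun x hx => (hderiv x hx).continuousAt.continuousWithinAt)
    (fun x hx => (hderiv x (Ico_subset_Icc_self hx)).hasDerivWithinAt)
    (fun x hx h0 => (hT x (hTs.trans hx.1)).2 h0.symm) ⟨ht, le_rfl⟩

lemma exists_eventually_hasDerivAt_of_continuousAt (hp : ∀ᶠ t in atTop, ContinuousAt p t) :
    ∃ P : ℝ → ℝ, ∀ᶠ t in atTop, HasDerivAt P (p t) t := by
  obtain ⟨T, hT⟩ := eventually_atTop.1 hp
  have hcont : Continuous fun t => p (max t T) := continuous_iff_continuousAt.2 fun t =>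
    (hT _ (le_max_right t T)).comp (f := fun t => max t T) (by fun_prop)
  refine ⟨fun t => ∫ x in T..t, p (max x T), ?_⟩
  filter_upwards [eventually_ge_atTop T] with t ht
  have hderiv := (hcont.integral_hasStrictDerivAt T t).hasDerivAt
  rwa [max_eq_left ht] at hderiv

lemma eventually_nonneg_or_nonpos_of_hasDerivAt_sub_mul_of_nonneg
    (hp : ∀ᶠ t in atTop, ContinuousAt p t) (hq : ∀ᶠ t in atTop, 0 ≤ q t)
    (hg : ∀ᶠ t in atTop, HasDerivAt g (q t - p t * g t) t) :
    (∀ᶠ t in atTop, 0 ≤ g t) ∨ ∀ᶠ t in atTop, g t ≤ 0 := by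
  obtain ⟨P, hP⟩ := exists_eventually_hasDerivAt_of_continuousAt hp
  have hderiv : ∀ᶠ t in atTop,
      HasDerivAt (fun t => g t * Real.exp (P t)) (q t * Real.exp (P t)) t := by
    filter_upwards [hg, hP] with t hgt hPt
    exact (hgt.mul hPt.exp).congr_deriv (by ring)
  obtain ⟨T, hmono⟩ := (eventually_monotoneOn_Ici_of_hasDerivAt_nonneg hderiv
    (hq.mono fun t ht => mul_nonneg ht (Real.exp_pos _).le)).exists
  by_cases hex : ∃ s ≥ T, 0 ≤ g s
  · obtain ⟨s, hTs, hs⟩ := hex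
    left
    filter_upwards [eventually_ge_atTop s] with t ht
    refine nonneg_of_mul_nonneg_left ?_ (Real.exp_pos (P t))
    exact (mul_nonneg hs (Real.exp_pos _).le).trans (hmono hTs (hTs.trans ht) ht)
  · push Not at hex
    right
    filter_upwards [eventually_ge_atTop T] with t ht using (hex t ht).le

lemma exists_tendsto_of_abs_deriv_le
    (hg : ∀ᶠ t in atTop, HasDerivAt g (g' t) t) (hh : ∀ᶠ t in atTop, HasDerivAt h (h' t) t)
    (hle : ∀ᶠ t in atTop, |g' t| ≤ h' t) (hlim : Tendsto h atTop (𝓝 l)) :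
    ∃ m, Tendsto g atTop (𝓝 m) := by
  obtain ⟨T, hT⟩ := eventually_atTop.1 (hg.and (hh.and hle))
  have hg_deriv : ∀ t ∈ Ioi T, HasDerivAt g (g' t) t := fun t ht => (hT t ht.le).1
  have hh'_int : IntegrableOn h' (Ioi T) :=
    integrableOn_Ioi_deriv_of_nonneg' (fun t ht => (hT t ht).2.1)
      (fun t ht => (abs_nonneg _).trans (hT t ht.le).2.2) hlim
  have hg'_meas : AEStronglyMeasurable g' (volume.restrict (Ioi T)) :=
    (aestronglyMeasurable_deriv g _).congr
      ((ae_restrict_mem measurableSet_Ioi).mono fun t ht => (hg_deriv t ht).deriv)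
  have hg'_int : IntegrableOn g' (Ioi T) := Integrable.mono' hh'_int hg'_meas
    ((ae_restrict_mem measurableSet_Ioi).mono fun t ht => (hT t (mem_Ioi.1 ht).le).2.2)
  exact ⟨_, tendsto_limUnder_of_hasDerivAt_of_integrableOn_Ioi hg_deriv hg'_int⟩

lemma not_isBoundedUnder_le_of_continuousOn_Ici {a : ℝ} (hcont : ContinuousOn g (Ici a))
    (hnonneg : ∀ᶠ t in atTop, 0 ≤ g t) (hunb : ¬ ∃ M, ∀ t ∈ Ici a, |g t| ≤ M) :
    ¬ IsBoundedUnder (· ≤ ·) atTop g := by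
  rintro ⟨M, hM⟩
  obtain ⟨T, hT⟩ := eventually_atTop.1 (hnonneg.and (eventually_map.1 hM))
  obtain ⟨K, hK⟩ := (isCompact_Icc (a := a) (b := T)).exists_bound_of_continuousOn
    (hcont.mono Icc_subset_Ici_self)
  refine hunb ⟨max K M, fun t ht => ?_⟩
  rcases le_total t T with htT | hTt
  · exact le_max_of_le_left (hK t ⟨ht, htT⟩)
  · exact le_max_of_le_right ((abs_of_nonneg (hT t hTt).1).trans_le (hT t hTt).2)

end Calculus

/-- `f` solves `f''' + f f'' - β f'² = 0` in a neighbourhood of `+∞`, with first and second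
derivatives `f'` and `f''`. The third derivative is eliminated by means of the equation. -/
structure IsSolutionAtTop (β : ℝ) (f f' f'' : ℝ → ℝ) : Prop where
  hasDerivAt : ∀ᶠ t in atTop, HasDerivAt f (f' t) t
  hasDerivAt_deriv : ∀ᶠ t in atTop, HasDerivAt f' (f'' t) t
  hasDerivAt_deriv2 : ∀ᶠ t in atTop, HasDerivAt f'' (β * f' t ^ 2 - f t * f'' t) t

/-- The flux `f'' + f f'` of a solution, which the equation `f''' + f f'' - β f'² = 0` puts in the
balance form `flux' = (1 + β) f'²`. -/
def flux (f f' f'' : ℝ → ℝ) (t : ℝ) : ℝ := f'' t + f t * f' t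

namespace IsSolutionAtTop

variable {β : ℝ} {f f' f'' : ℝ → ℝ}

lemma of_forall_mem_Ici {f''' : ℝ → ℝ} {t₀ : ℝ} (hf : ∀ t ∈ Ici t₀, HasDerivAt f (f' t) t)
    (hf' : ∀ t ∈ Ici t₀, HasDerivAt f' (f'' t) t) (hf'' : ∀ t ∈ Ici t₀, HasDerivAt f'' (f''' t) t)
    (heq : ∀ t ∈ Ici t₀, f''' t + f t * f'' t - β * f' t ^ 2 = 0) :
    IsSolutionAtTop β f f' f'' where
  hasDerivAt := (eventually_ge_atTop t₀).mono hf
  hasDerivAt_deriv := (eventually_ge_atTop t₀).mono hf'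
  hasDerivAt_deriv2 := (eventually_ge_atTop t₀).mono fun t ht =>
    (hf'' t ht).congr_deriv (by linarith [heq t ht])

lemma eventually_deriv2_nonneg_or_nonpos (hf : IsSolutionAtTop β f f' f'') :
    (∀ᶠ t in atTop, 0 ≤ f'' t) ∨ ∀ᶠ t in atTop, f'' t ≤ 0 := by
  have hcont : ∀ᶠ t in atTop, ContinuousAt f t := hf.hasDerivAt.mono fun t ht => ht.continuousAt
  rcases le_total 0 β with hβ | hβ
  · exact eventually_nonneg_or_nonpos_of_hasDerivAt_sub_mul_of_nonneg hcont
      (.of_forall fun t => mul_nonneg hβ (sq_nonneg (f' t))) hf.hasDerivAt_deriv2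
  · have hneg : ∀ᶠ t in atTop,
        HasDerivAt (fun t => -f'' t) (-β * f' t ^ 2 - f t * -f'' t) t :=
      hf.hasDerivAt_deriv2.mono fun t ht => ht.fun_neg.congr_deriv (by ring)
    have hsource : ∀ᶠ t in atTop, 0 ≤ -β * f' t ^ 2 :=
      .of_forall fun t => mul_nonneg (neg_nonneg.2 hβ) (sq_nonneg (f' t))
    simpa only [neg_nonneg, neg_nonpos] using
      (eventually_nonneg_or_nonpos_of_hasDerivAt_sub_mul_of_nonneg hcont hsource hneg).symm

lemma eventually_deriv2_nonpos (hf : IsSolutionAtTop β f f' f'')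
    (hunb : ¬ IsBoundedUnder (· ≤ ·) atTop f) (hlim : Tendsto f' atTop (𝓝 0)) :
    ∀ᶠ t in atTop, f'' t ≤ 0 := by
  refine hf.eventually_deriv2_nonneg_or_nonpos.resolve_left fun hnonneg => ?_
  obtain ⟨T, hmono⟩ :=
    (eventually_monotoneOn_Ici_of_hasDerivAt_nonneg hf.hasDerivAt_deriv hnonneg).exists
  have hf'_nonpos : ∀ᶠ t in atTop, f' t ≤ 0 := by
    filter_upwards [eventually_ge_atTop T] with t ht
    refine ge_of_tendsto hlim ?_
    filter_upwards [eventually_ge_atTop t] with s hs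
    exact hmono ht (ht.trans hs) hs
  exact frequently_deriv_pos_of_not_isBoundedUnder_le hf.hasDerivAt hunb
    (hf'_nonpos.mono fun t ht => ht.not_gt)

lemma eventually_abs_deriv2_le (hf : IsSolutionAtTop β f f' f'') (htop : Tendsto f atTop atTop)
    (hlim : Tendsto f' atTop (𝓝 0)) (hf' : ∀ᶠ t in atTop, 0 < f' t)
    (hf'' : ∀ᶠ t in atTop, f'' t ≤ 0) : ∀ᶠ t in atTop, |f'' t| ≤ f' t := by
  have hderiv : ∀ᶠ t in atTop, HasDerivAt (fun t => f'' t + f' t)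
      (β * f' t ^ 2 - f t * f'' t + f'' t) t := by
    filter_upwards [hf.hasDerivAt_deriv, hf.hasDerivAt_deriv2] with t h1 h2 using h2.add h1
  have hlarge : ∀ᶠ t in atTop, 1 < f t + β * f' t :=
    (htop.atTop_add (hlim.const_mul β)).eventually_gt_atTop 1
  have hbarrier : ∀ᶠ t in atTop, f'' t + f' t = 0 → 0 < β * f' t ^ 2 - f t * f'' t + f'' t := by
    filter_upwards [hlarge, hf'] with t hlt hpos hzero
    calc 0 < f' t * (f t + β * f' t - 1) := mul_pos hpos (sub_pos.2 hlt)
      _ = β * f' t ^ 2 - f t * f'' t + f'' t := by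
        rw [eq_neg_of_add_eq_zero_left hzero]; ring
  have hsum_deriv : ∀ᶠ t in atTop, HasDerivAt (fun t => f' t + f t) (f'' t + f' t) t := by
    filter_upwards [hf.hasDerivAt, hf.hasDerivAt_deriv] with t h0 h1 using h1.add h0
  have hfreq : ∃ᶠ t in atTop, 0 ≤ f'' t + f' t :=
    (frequently_deriv_pos_of_not_isBoundedUnder_le hsum_deriv
      (not_isBoundedUnder_of_tendsto_atTop (hlim.add_atTop htop))).mono fun t ht => ht.le
  filter_upwards [eventually_nonneg_of_hasDerivAt_pos_of_eq_zero hderiv hbarrier hfreq, hf'']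
    with t hsum hnonpos
  rw [abs_of_nonpos hnonpos]
  linarith

lemma hasDerivAt_flux (hf : IsSolutionAtTop β f f' f'') :
    ∀ᶠ t in atTop, HasDerivAt (flux f f' f'') ((1 + β) * f' t ^ 2) t := by
  filter_upwards [hf.hasDerivAt, hf.hasDerivAt_deriv, hf.hasDerivAt_deriv2] with t h0 h1 h2
  exact (h2.add (h0.mul h1)).congr_deriv (by ring)

lemma hasDerivAt_log_flux_sub_log (hf : IsSolutionAtTop β f f' f'')
    (hpos : ∀ᶠ t in atTop, 0 < f t) (hflux : ∀ᶠ t in atTop, 0 < flux f f' f'' t) :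
    ∀ᶠ t in atTop, HasDerivAt (fun t => Real.log (flux f f' f'' t) - (1 + β) * Real.log (f t))
      (-(1 + β) * (f'' t * f' t / (f t * flux f f' f'' t))) t := by
  filter_upwards [hf.hasDerivAt, hf.hasDerivAt_flux, hpos, hflux] with t h0 hA hft hAt
  refine ((hA.log hAt.ne').sub ((h0.log hft.ne').const_mul (1 + β))).congr_deriv ?_
  have hA_ne := hAt.ne'
  field_simp
  rw [flux]
  ring

end IsSolutionAtTop

section Flux

variable {f f' f'' : ℝ → ℝ}

lemma eventually_half_mul_le_flux (htop : Tendsto f atTop atTop)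
    (hf'' : ∀ᶠ t in atTop, |f'' t| ≤ f' t) :
    ∀ᶠ t in atTop, f t * f' t / 2 ≤ flux f f' f'' t := by
  filter_upwards [htop.eventually_ge_atTop 2, hf''] with t hft hle
  have hmul : 2 * f' t ≤ f t * f' t := mul_le_mul_of_nonneg_right hft ((abs_nonneg _).trans hle)
  rw [flux]
  linarith [neg_le_of_abs_le hle]

lemma flux_isEquivalent (htop : Tendsto f atTop atTop) (hf'' : ∀ᶠ t in atTop, |f'' t| ≤ f' t) :
    flux f f' f'' ~[atTop] f * f' := by
  have hO : f'' =O[atTop] f' :=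
    .of_bound' (hf''.mono fun t ht => ht.trans (le_abs_self _))
  have ho : f' =o[atTop] (f * f') := by
    have hone : (fun _ : ℝ => (1 : ℝ)) =o[atTop] f :=
      (isLittleO_const_left).2 (.inr (tendsto_norm_atTop_atTop.comp htop))
    exact (hone.mul_isBigO (isBigO_refl f' atTop)).congr_left fun t => one_mul (f' t)
  have hdiff : flux f f' f'' - f * f' = f'' := by
    ext t
    simp only [flux, Pi.sub_apply, Pi.mul_apply, add_sub_cancel_right]
  rw [IsEquivalent, hdiff]
  exact hO.trans_isLittleO ho

lemma abs_mul_div_mul_flux_le {t : ℝ} (hpos : 0 < f t) (hf' : 0 < f' t) (hf'' : |f'' t| ≤ f' t)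
    (hflux : f t * f' t / 2 ≤ flux f f' f'' t) :
    |f'' t * f' t / (f t * flux f f' f'' t)| ≤ 2 * (f' t / f t ^ 2) := by
  have hflux_pos : 0 < flux f f' f'' t := lt_of_lt_of_le (by positivity) hflux
  calc |f'' t * f' t / (f t * flux f f' f'' t)|
      = |f'' t| * f' t / (f t * flux f f' f'' t) := by
        rw [abs_div, abs_mul, abs_of_pos hf', abs_of_pos (mul_pos hpos hflux_pos)]
    _ ≤ f' t * f' t / (f t * (f t * f' t / 2)) := by gcongr
    _ = 2 * (f' t / f t ^ 2) := by field_simp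

end Flux

namespace IsSolutionAtTop

variable {β : ℝ} {f f' f'' : ℝ → ℝ}

lemma exists_tendsto_log_flux_sub_log (hf : IsSolutionAtTop β f f' f'')
    (htop : Tendsto f atTop atTop) (hf' : ∀ᶠ t in atTop, 0 < f' t)
    (hf'' : ∀ᶠ t in atTop, |f'' t| ≤ f' t) :
    ∃ m, Tendsto (fun t => Real.log (flux f f' f'' t) - (1 + β) * Real.log (f t)) atTop (𝓝 m) := by
  have hpos : ∀ᶠ t in atTop, 0 < f t := htop.eventually_gt_atTop 0
  have hflux := eventually_half_mul_le_flux htop hf''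
  have hflux_pos : ∀ᶠ t in atTop, 0 < flux f f' f'' t := by
    filter_upwards [hpos, hf', hflux] with t hft hft' hle
    exact lt_of_lt_of_le (by positivity) hle
  have hinv_deriv : ∀ᶠ t in atTop, HasDerivAt (fun t => -(2 * |1 + β|) * (f t)⁻¹)
      (|1 + β| * (2 * (f' t / f t ^ 2))) t := by
    filter_upwards [hf.hasDerivAt, hpos] with t h0 hft
    exact ((h0.fun_inv hft.ne').const_mul _).congr_deriv (by ring)
  refine exists_tendsto_of_abs_deriv_le (hf.hasDerivAt_log_flux_sub_log hpos hflux_pos) hinv_deriv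
    ?_ ((tendsto_inv_atTop_zero.comp htop).const_mul _)
  filter_upwards [hpos, hf', hf'', hflux] with t hft hft' hft'' hle
  rw [abs_mul, abs_neg]
  gcongr
  exact abs_mul_div_mul_flux_le hft hft' hft'' hle

lemma exists_pos_tendsto_rpow_mul_flux (hf : IsSolutionAtTop β f f' f'')
    (htop : Tendsto f atTop atTop) (hf' : ∀ᶠ t in atTop, 0 < f' t)
    (hf'' : ∀ᶠ t in atTop, |f'' t| ≤ f' t) :
    ∃ l > 0, Tendsto (fun t => f t ^ (-(1 + β)) * flux f f' f'' t) atTop (𝓝 l) := by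
  obtain ⟨m, hm⟩ := hf.exists_tendsto_log_flux_sub_log htop hf' hf''
  refine ⟨Real.exp m, Real.exp_pos m, (hm.rexp).congr' ?_⟩
  filter_upwards [htop.eventually_gt_atTop 0, hf', eventually_half_mul_le_flux htop hf'']
    with t hft hft' hle
  have hflux_pos : 0 < flux f f' f'' t := lt_of_lt_of_le (by positivity) hle
  rw [Real.rpow_def_of_pos hft, sub_eq_neg_add, Real.exp_add, Real.exp_log hflux_pos]
  ring_nf

end IsSolutionAtTop

theorem stmt_10_general {β : ℝ} {f f' f'' : ℝ → ℝ} (hf : IsSolutionAtTop β f f' f'')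
    (hunb : ¬ IsBoundedUnder (· ≤ ·) atTop f) (hlim : Tendsto f' atTop (𝓝 0)) :
    ∃ l₀ > 0, Tendsto (fun t => f' t * f t ^ (-β)) atTop (𝓝 l₀) := by
  have hconcave : ∀ᶠ t in atTop, f'' t ≤ 0 := hf.eventually_deriv2_nonpos hunb hlim
  have hf' : ∀ᶠ t in atTop, 0 < f' t :=
    eventually_deriv_pos_of_deriv2_nonpos_of_not_isBoundedUnder_le hf.hasDerivAt
      hf.hasDerivAt_deriv hconcave hunb
  have htop : Tendsto f atTop atTop :=
    tendsto_atTop_of_hasDerivAt_nonneg_of_not_isBoundedUnder_le hf.hasDerivAt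
      (hf'.mono fun t ht => ht.le) hunb
  have hf'' : ∀ᶠ t in atTop, |f'' t| ≤ f' t := hf.eventually_abs_deriv2_le htop hlim hf' hconcave
  obtain ⟨l₀, hl₀, hflux⟩ := hf.exists_pos_tendsto_rpow_mul_flux htop hf' hf''
  have hequiv : (fun t => f t ^ (-(1 + β))) * flux f f' f'' ~[atTop]
      (fun t => f t ^ (-(1 + β))) * (f * f') := IsEquivalent.refl.mul (flux_isEquivalent htop hf'')
  refine ⟨l₀, hl₀, (hequiv.tendsto_nhds hflux).congr' ?_⟩
  filter_upwards [htop.eventually_gt_atTop 0] with t hft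
  calc f t ^ (-(1 + β)) * (f t * f' t) = f' t * (f t ^ (-(1 + β)) * f t) := by ring
    _ = f' t * f t ^ (-β) := by rw [← Real.rpow_add_one hft.ne']; ring_nf

/-- Let β < 0 and f be a non-constant unbounded solution of
f''' + f·f'' − β·(f')² = 0 on [t₀, ∞) with f'(t) → 0 at infinity and f positive
at infinity.  Then f'(t)·f(t)^{−β} converges to a finite positive limit l₀. -/
theorem stmt_10 (β : ℝ) (hβ : β < 0) (t₀ : ℝ)
    (f f' f'' f''' : ℝ → ℝ)
    (hf1 : ∀ t ∈ Set.Ici t₀, HasDerivAt f (f' t) t)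
    (hf2 : ∀ t ∈ Set.Ici t₀, HasDerivAt f' (f'' t) t)
    (hf3 : ∀ t ∈ Set.Ici t₀, HasDerivAt f'' (f''' t) t)
    (heq : ∀ t ∈ Set.Ici t₀, f''' t + f t * f'' t - β * (f' t) ^ 2 = 0)
    (hnc : ¬ ∃ c : ℝ, ∀ t ∈ Set.Ici t₀, f t = c)
    (hunb : ¬ ∃ M : ℝ, ∀ t ∈ Set.Ici t₀, |f t| ≤ M)
    (hlim : Filter.Tendsto f' Filter.atTop (nhds 0))
    (hposinf : ∀ᶠ t in Filter.atTop, 0 < f t) :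
    ∃ l₀ > 0, Filter.Tendsto (fun t => f' t * (f t) ^ (-β))
      Filter.atTop (nhds l₀) := by
  have hsol := IsSolutionAtTop.of_forall_mem_Ici hf1 hf2 hf3 heq
  exact stmt_10_general hsol (not_isBoundedUnder_le_of_continuousOn_Ici
    (fun t ht => (hf1 t ht).continuousAt.continuousWithinAt) (hposinf.mono fun t ht => ht.le) hunb)
    hlim
end

section
/- Let β < 0 and let f be a non-constant unbounded solution of equation (1) on [t₀, ∞) satisfying condition (2), such that f is negative at infinity (i.e. f(t) < 0 for all sufficiently large t). Then f'(t)·(−f(t))^{−β} converges as t → ∞ to a finite limit l₀ with l₀ < 0. -/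
/-!
A zero of `f'` together with one of `f''` would make `f` constant, because `(f', f'')` solves a
linear system. Since `-f > 0` acts as a growth rate for `f''` and `f'''`, a negative value of `f''`
or a positive value of `f'''` would persist and drive `f'` to infinity; hence `f'' ≥ 0`, `f''' ≤ 0`
and `f' < 0`. The logarithm of `-f' * (-f) ^ (-β)` has derivative `-f''' / (f f') ≥ 0`, and adding
`f'' / (f f')` and a suitable nonpositive multiple of `f'`, both of them nonnegative, turns it into
a nonincreasing function. Thus it is monotone and bounded.
-/

open Filter Set Topology

section Calculus

theorem monotoneOn_of_hasDerivAt_nonneg {s : Set ℝ} (hs : Convex ℝ s) {f f' : ℝ → ℝ}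
    (hf : ∀ t ∈ s, HasDerivAt f (f' t) t) (hf' : ∀ t ∈ s, 0 ≤ f' t) : MonotoneOn f s :=
  monotoneOn_of_hasDerivWithinAt_nonneg hs (HasDerivAt.continuousOn hf)
    (fun t ht => (hf t (interior_subset ht)).hasDerivWithinAt)
    fun t ht => hf' t (interior_subset ht)

theorem antitoneOn_of_hasDerivAt_nonpos {s : Set ℝ} (hs : Convex ℝ s) {f f' : ℝ → ℝ}
    (hf : ∀ t ∈ s, HasDerivAt f (f' t) t) (hf' : ∀ t ∈ s, f' t ≤ 0) : AntitoneOn f s :=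
  antitoneOn_of_hasDerivWithinAt_nonpos hs (HasDerivAt.continuousOn hf)
    (fun t ht => (hf t (interior_subset ht)).hasDerivWithinAt)
    fun t ht => hf' t (interior_subset ht)

theorem le_of_mul_self_le_hasDerivAt {a : ℝ} {g h h' : ℝ → ℝ}
    (hh : ∀ t ∈ Ici a, HasDerivAt h (h' t) t) (hg : ∀ t ∈ Ici a, 0 < g t)
    (hgh : ∀ t ∈ Ici a, g t * h t ≤ h' t) (ha : 0 < h a) : ∀ t ∈ Ici a, h a ≤ h t := by
  intro t ht
  refine image_le_of_deriv_right_lt_deriv_boundary' (f := fun _ => h a) (f' := fun _ => 0)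
    (B' := h') continuousOn_const (fun _ _ => hasDerivWithinAt_const _ _ _) le_rfl
    (HasDerivAt.continuousOn fun x hx => hh x hx.1)
    (fun x hx => (hh x hx.1).hasDerivWithinAt) (fun x hx hx_eq => ?_) ⟨ht, le_rfl⟩
  calc 0 < g x * h x := mul_pos (hg x hx.1) (hx_eq ▸ ha)
    _ ≤ h' x := hgh x hx.1

theorem tendsto_atTop_of_le_hasDerivAt {f f' : ℝ → ℝ} {c : ℝ} (hc : 0 < c)
    (hf : ∀ᶠ t in atTop, HasDerivAt f (f' t) t) (hf' : ∀ᶠ t in atTop, c ≤ f' t) :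
    Tendsto f atTop atTop := by
  obtain ⟨a, ha⟩ := eventually_atTop.1 (hf.and hf')
  have hmono : MonotoneOn (fun t => f t - c * t) (Ici a) :=
    monotoneOn_of_hasDerivAt_nonneg (convex_Ici a)
      (fun t ht => (ha t ht).1.sub ((hasDerivAt_id t).const_mul c))
      fun t ht => by linarith [(ha t ht).2]
  have hline : Tendsto (fun t => (f a - c * a) + c * t) atTop atTop :=
    tendsto_atTop_add_const_left _ _ (tendsto_id.const_mul_atTop hc)
  refine tendsto_atTop_mono' _ ?_ hline
  filter_upwards [eventually_ge_atTop a] with t ht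
  linarith [hmono self_mem_Ici ht ht]

theorem exists_tendsto_atTop_of_monotoneOn_Ici {ι α : Type*} [LinearOrder ι]
    [ConditionallyCompleteLinearOrder α] [TopologicalSpace α] [OrderTopology α]
    {f : ι → α} {a : ι} (hf : MonotoneOn f (Ici a)) (hbdd : BddAbove (f '' Ici a)) :
    ∃ l, Tendsto f atTop (𝓝 l) := by
  have hmono : Monotone fun t => f (max a t) := fun s t hst =>
    hf (le_max_left a s) (le_max_left a t) (max_le_max_left a hst)
  have hrange : BddAbove (range fun t => f (max a t)) :=
    hbdd.mono (range_subset_iff.2 fun t => mem_image_of_mem f (le_max_left a t))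
  refine ⟨_, (tendsto_atTop_ciSup hmono hrange).congr' ?_⟩
  filter_upwards [eventually_ge_atTop a] with t ht
  rw [max_eq_right ht]

theorem eqOn_zero_of_hasDerivAt_clm_apply {E : Type*} [NormedAddCommGroup E] [NormedSpace ℝ E]
    {A : ℝ → E →L[ℝ] E} {y : ℝ → E} {a b c : ℝ} (hA : ContinuousOn A (Icc a b))
    (hy : ∀ t ∈ Icc a b, HasDerivAt y (A t (y t)) t) (hc : c ∈ Ioo a b) (hyc : y c = 0) :
    EqOn y 0 (Icc a b) := by
  obtain ⟨K, hK⟩ := isCompact_Icc.exists_bound_of_continuousOn hA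
  have hlip : ∀ t ∈ Ioo a b, LipschitzOnWith K.toNNReal (A t) univ := fun t ht =>
    ((A t).lipschitz.weaken
      (NNReal.le_toNNReal_of_coe_le (hK t (Ioo_subset_Icc_self ht)))).lipschitzOnWith
  exact ODE_solution_unique_of_mem_Icc (v := fun t => A t) (s := fun _ => univ) hlip hc
    (HasDerivAt.continuousOn hy) (fun t ht => hy t (Ioo_subset_Icc_self ht))
    (fun _ _ => mem_univ _) continuousOn_const
    (fun t _ => by simp) (fun _ _ => mem_univ _) hyc

end Calculus

/-- `f` solves `f''' + f f'' - β (f')² = 0` at every point of `s`, with first and second derivatives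
`f'` and `f''`. The third derivative is not a separate datum: the equation is solved for it. -/
structure IsSimilaritySolutionOn (β : ℝ) (s : Set ℝ) (f f' f'' : ℝ → ℝ) : Prop where
  hasDerivAt : ∀ t ∈ s, HasDerivAt f (f' t) t
  hasDerivAt_deriv : ∀ t ∈ s, HasDerivAt f' (f'' t) t
  hasDerivAt_deriv2 : ∀ t ∈ s, HasDerivAt f'' (β * f' t ^ 2 - f t * f'' t) t

namespace IsSimilaritySolutionOn

variable {β : ℝ} {s u : Set ℝ} {f f' f'' : ℝ → ℝ}

theorem mono (h : IsSimilaritySolutionOn β s f f' f'') (hus : u ⊆ s) :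
    IsSimilaritySolutionOn β u f f' f'' where
  hasDerivAt t ht := h.hasDerivAt t (hus ht)
  hasDerivAt_deriv t ht := h.hasDerivAt_deriv t (hus ht)
  hasDerivAt_deriv2 t ht := h.hasDerivAt_deriv2 t (hus ht)

theorem deriv_eq_zero_of_mem_Icc {a b c : ℝ} (h : IsSimilaritySolutionOn β (Icc a b) f f' f'')
    (hc : c ∈ Ioo a b) (hf' : f' c = 0) (hf'' : f'' c = 0) : ∀ t ∈ Icc a b, f' t = 0 := by
  let A : ℝ → ℝ × ℝ →L[ℝ] ℝ × ℝ := fun t =>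
    .prod (.snd ℝ ℝ ℝ) 0 + (β * f' t) • .prod 0 (.fst ℝ ℝ ℝ) - f t • .prod 0 (.snd ℝ ℝ ℝ)
  have hA : ContinuousOn A (Icc a b) := by
    have hcont := HasDerivAt.continuousOn h.hasDerivAt
    have hcont' := HasDerivAt.continuousOn h.hasDerivAt_deriv
    fun_prop
  have hy : ∀ t ∈ Icc a b, HasDerivAt (fun t => (f' t, f'' t)) (A t (f' t, f'' t)) t := by
    intro t ht
    refine ((h.hasDerivAt_deriv t ht).prodMk (h.hasDerivAt_deriv2 t ht)).congr_deriv ?_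
    simp [A, sq, mul_assoc]
  intro t ht
  exact congrArg Prod.fst
    (eqOn_zero_of_hasDerivAt_clm_apply hA hy hc (Prod.ext hf' hf'') ht)

theorem eq_const_of_deriv_eq_zero {a c : ℝ} (h : IsSimilaritySolutionOn β (Ici a) f f' f'')
    (hc : c ∈ Ioi a) (hf' : f' c = 0) (hf'' : f'' c = 0) : ∀ t ∈ Ici a, f t = f a := by
  intro t ht
  have hsol := h.mono (Icc_subset_Ici_self : Icc a (max c t + 1) ⊆ Ici a)
  have hzero : ∀ x ∈ Icc a (max c t + 1), f' x = 0 :=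
    hsol.deriv_eq_zero_of_mem_Icc ⟨hc, by linarith [le_max_left c t]⟩ hf' hf''
  exact constant_of_has_deriv_right_zero (HasDerivAt.continuousOn hsol.hasDerivAt)
    (fun x hx => hzero x (Ico_subset_Icc_self hx) ▸
      (h.hasDerivAt x hx.1).hasDerivWithinAt) t ⟨ht, by linarith [le_max_right c t]⟩

end IsSimilaritySolutionOn

/-- A solution on `[T, ∞)` that is negative there and whose derivative tends to `0` at infinity. -/
structure IsNegativeDecayingSolution (β T : ℝ) (f f' f'' : ℝ → ℝ) : Prop
    extends IsSimilaritySolutionOn β (Ici T) f f' f'' where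
  neg : ∀ t ∈ Ici T, f t < 0
  tendsto_deriv : Tendsto f' atTop (𝓝 0)

namespace IsNegativeDecayingSolution

variable {β T : ℝ} {f f' f'' : ℝ → ℝ}

theorem deriv2_nonneg (h : IsNegativeDecayingSolution β T f f' f'') (hβ : β ≤ 0) :
    ∀ t ∈ Ici T, 0 ≤ f'' t := by
  intro a ha
  by_contra! hlt
  have hsub : Ici a ⊆ Ici T := Ici_subset_Ici.2 ha
  have hpersist : ∀ t ∈ Ici a, -f'' a ≤ -f'' t :=
    le_of_mul_self_le_hasDerivAt (g := fun t => -f t)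
      (fun t ht => (h.hasDerivAt_deriv2 t (hsub ht)).neg)
      (fun t ht => neg_pos.2 (h.neg t (hsub ht)))
      (fun t _ => by
        simp only [Pi.neg_apply]
        linarith [mul_nonpos_of_nonpos_of_nonneg hβ (sq_nonneg (f' t))]) (neg_pos.2 hlt)
  have hdiverge : Tendsto (fun t => -f' t) atTop atTop :=
    tendsto_atTop_of_le_hasDerivAt (neg_pos.2 hlt)
      (eventually_atTop.2 ⟨a, fun t ht => (h.hasDerivAt_deriv t (hsub ht)).neg⟩)
      (eventually_atTop.2 ⟨a, hpersist⟩)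
  exact not_tendsto_nhds_of_tendsto_atTop hdiverge _ h.tendsto_deriv.neg

theorem monotoneOn_deriv (h : IsNegativeDecayingSolution β T f f' f'') (hβ : β ≤ 0) :
    MonotoneOn f' (Ici T) :=
  monotoneOn_of_hasDerivAt_nonneg (convex_Ici T) h.hasDerivAt_deriv (h.deriv2_nonneg hβ)

theorem deriv_nonpos (h : IsNegativeDecayingSolution β T f f' f'') (hβ : β ≤ 0) :
    ∀ t ∈ Ici T, f' t ≤ 0 := by
  intro t ht
  refine ge_of_tendsto h.tendsto_deriv ?_
  filter_upwards [eventually_ge_atTop t] with s hs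
  exact h.monotoneOn_deriv hβ ht (le_trans ht hs) hs

theorem antitoneOn (h : IsNegativeDecayingSolution β T f f' f'') (hβ : β ≤ 0) :
    AntitoneOn f (Ici T) :=
  antitoneOn_of_hasDerivAt_nonpos (convex_Ici T) h.hasDerivAt (h.deriv_nonpos hβ)

theorem deriv_neg_of_not_const {t₀ : ℝ} (h : IsNegativeDecayingSolution β T f f' f'')
    (hβ : β ≤ 0) (h₀ : IsSimilaritySolutionOn β (Ici t₀) f f' f'') (hT : t₀ ≤ T)
    (hnc : ¬ ∃ c, ∀ t ∈ Ici t₀, f t = c) : ∀ t ∈ Ici T, f' t < 0 := by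
  intro t ht
  refine (h.deriv_nonpos hβ t ht).lt_of_ne fun hzero => hnc ⟨f t₀, ?_⟩
  have hlt : T < t + 1 := lt_add_of_le_of_pos ht one_pos
  have hzero' : f' (t + 1) = 0 :=
    (h.deriv_nonpos hβ _ hlt.le).antisymm
      (hzero ▸ h.monotoneOn_deriv hβ ht hlt.le (by linarith))
  have hmax : IsLocalMax f' (t + 1) := by
    filter_upwards [Ici_mem_nhds hlt] with x hx
    exact hzero' ▸ h.deriv_nonpos hβ x hx
  exact h₀.eq_const_of_deriv_eq_zero (hT.trans_lt hlt) hzero'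
    (hmax.hasDerivAt_eq_zero (h.hasDerivAt_deriv _ hlt.le))

theorem deriv3_nonpos (h : IsNegativeDecayingSolution β T f f' f'') (hβ : β ≤ 0) :
    ∀ t ∈ Ici T, β * f' t ^ 2 - f t * f'' t ≤ 0 := by
  intro a ha
  by_contra! hgt
  have hsub : Ici a ⊆ Ici T := Ici_subset_Ici.2 ha
  have hpersist : ∀ t ∈ Ici a, β * f' a ^ 2 - f a * f'' a ≤ β * f' t ^ 2 - f t * f'' t := by
    refine le_of_mul_self_le_hasDerivAt (h := fun t => β * f' t ^ 2 - f t * f'' t)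
      (fun t ht => (((h.hasDerivAt_deriv t (hsub ht)).pow 2).const_mul β).sub
        ((h.hasDerivAt t (hsub ht)).mul (h.hasDerivAt_deriv2 t (hsub ht))))
      (fun t ht => neg_pos.2 (h.neg t (hsub ht))) (fun t ht => ?_) hgt
    have hprod : 0 ≤ (2 * β - 1) * (f' t * f'' t) :=
      mul_nonneg_of_nonpos_of_nonpos (by linarith) (mul_nonpos_of_nonpos_of_nonneg
        (h.deriv_nonpos hβ t (hsub ht)) (h.deriv2_nonneg hβ t (hsub ht)))
    simp only [Nat.cast_ofNat, Nat.add_one_sub_one, pow_one]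
    linarith
  have hdiverge₂ : Tendsto f'' atTop atTop :=
    tendsto_atTop_of_le_hasDerivAt hgt
      (eventually_atTop.2 ⟨T, h.hasDerivAt_deriv2⟩) (eventually_atTop.2 ⟨a, hpersist⟩)
  have hdiverge₁ : Tendsto f' atTop atTop :=
    tendsto_atTop_of_le_hasDerivAt one_pos
      (eventually_atTop.2 ⟨T, h.hasDerivAt_deriv⟩) (hdiverge₂.eventually_ge_atTop 1)
  exact not_tendsto_nhds_of_tendsto_atTop hdiverge₁ _ h.tendsto_deriv

end IsNegativeDecayingSolution

/-- The logarithm of `-f' * (-f) ^ (-β)`, for negative `f` and `f'`; a finite limit of it is what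
makes the limit of `f' * (-f) ^ (-β)` finite and nonzero. -/
noncomputable def logAmplitude (β : ℝ) (f f' : ℝ → ℝ) (t : ℝ) : ℝ :=
  Real.log (-f' t) - β * Real.log (-f t)

theorem neg_exp_logAmplitude {β t : ℝ} {f f' : ℝ → ℝ} (hf : f t < 0) (hf' : f' t < 0) :
    -Real.exp (logAmplitude β f f' t) = f' t * (-f t) ^ (-β) := by
  rw [logAmplitude, sub_eq_add_neg, Real.exp_add, Real.exp_log (neg_pos.2 hf'),
    Real.rpow_def_of_pos (neg_pos.2 hf)]
  ring_nf

theorem IsSimilaritySolutionOn.hasDerivAt_logAmplitude {β t : ℝ} {s : Set ℝ} {f f' f'' : ℝ → ℝ}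
    (h : IsSimilaritySolutionOn β s f f' f'') (ht : t ∈ s) (hf : f t ≠ 0) (hf' : f' t ≠ 0) :
    HasDerivAt (logAmplitude β f f') (-(β * f' t ^ 2 - f t * f'' t) / (f t * f' t)) t := by
  refine (((h.hasDerivAt_deriv t ht).neg.log (neg_ne_zero.2 hf')).sub
    (((h.hasDerivAt t ht).neg.log (neg_ne_zero.2 hf)).const_mul β)).congr_deriv ?_
  simp only [Pi.neg_apply]
  field_simp
  ring

theorem IsSimilaritySolutionOn.hasDerivAt_logAmplitude_add_div {β t : ℝ} {s : Set ℝ}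
    {f f' f'' : ℝ → ℝ} (h : IsSimilaritySolutionOn β s f f' f'') (ht : t ∈ s) (hf : f t ≠ 0)
    (hf' : f' t ≠ 0) :
    HasDerivAt (fun x => logAmplitude β f f' x + f'' x / (f x * f' x))
      (-f'' t / f t ^ 2 - f'' t ^ 2 / (f t * f' t ^ 2)) t := by
  refine ((h.hasDerivAt_logAmplitude ht hf hf').add ((h.hasDerivAt_deriv2 t ht).div
    ((h.hasDerivAt t ht).mul (h.hasDerivAt_deriv t ht)) (mul_ne_zero hf hf'))).congr_deriv ?_
  simp only [Pi.mul_apply]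
  field_simp
  ring

namespace IsNegativeDecayingSolution

variable {β T : ℝ} {f f' f'' : ℝ → ℝ}

theorem monotoneOn_logAmplitude (h : IsNegativeDecayingSolution β T f f' f'') (hβ : β ≤ 0)
    (hf' : ∀ t ∈ Ici T, f' t < 0) : MonotoneOn (logAmplitude β f f') (Ici T) :=
  monotoneOn_of_hasDerivAt_nonneg (convex_Ici T)
    (fun t ht => h.hasDerivAt_logAmplitude ht (h.neg t ht).ne (hf' t ht).ne)
    fun t ht => div_nonneg (neg_nonneg.2 (h.deriv3_nonpos hβ t ht))
      (mul_pos_of_neg_of_neg (h.neg t ht) (hf' t ht)).le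

theorem neg_deriv2_sq_div_le (h : IsNegativeDecayingSolution β T f f' f'') (hβ : β ≤ 0)
    (hf' : ∀ t ∈ Ici T, f' t < 0) :
    ∀ t ∈ Ici T, -(f'' t ^ 2 / (f t * f' t ^ 2)) ≤ -(β / f T ^ 2 * f'' t) := by
  intro t ht
  have hft := h.neg t ht
  have hf't := hf' t ht
  have hf''t := h.deriv2_nonneg hβ t ht
  have hratio : f'' t / f' t ^ 2 ≤ -β / -f t := by
    rw [div_le_div_iff₀ (sq_pos_of_neg hf't) (neg_pos.2 hft)]
    linarith [h.deriv3_nonpos hβ t ht]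
  have hsq : f T ^ 2 ≤ f t ^ 2 :=
    sq_le_sq.2 <| abs_le_abs_of_nonpos (h.neg T self_mem_Ici).le
      (h.antitoneOn hβ self_mem_Ici ht ht)
  calc -(f'' t ^ 2 / (f t * f' t ^ 2))
      = f'' t / f' t ^ 2 * (f'' t / -f t) := by field_simp
    _ ≤ -β / -f t * (f'' t / -f t) :=
        mul_le_mul_of_nonneg_right hratio (div_nonneg hf''t (neg_pos.2 hft).le)
    _ = -β * f'' t / f t ^ 2 := by field_simp
    _ ≤ -β * f'' t / f T ^ 2 :=
        div_le_div_of_nonneg_left (mul_nonneg (neg_nonneg.2 hβ) hf''t)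
          (sq_pos_of_neg (h.neg T self_mem_Ici)) hsq
    _ = -(β / f T ^ 2 * f'' t) := by ring

theorem antitoneOn_logAmplitude_add (h : IsNegativeDecayingSolution β T f f' f'') (hβ : β ≤ 0)
    (hf' : ∀ t ∈ Ici T, f' t < 0) :
    AntitoneOn (fun t => logAmplitude β f f' t + f'' t / (f t * f' t) + β / f T ^ 2 * f' t)
      (Ici T) := by
  refine antitoneOn_of_hasDerivAt_nonpos (convex_Ici T)
    (fun t ht => (h.hasDerivAt_logAmplitude_add_div ht (h.neg t ht).ne (hf' t ht).ne).add
      ((h.hasDerivAt_deriv t ht).const_mul (β / f T ^ 2))) fun t ht => ?_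
  have hfirst : -f'' t / f t ^ 2 ≤ 0 :=
    div_nonpos_of_nonpos_of_nonneg (neg_nonpos.2 (h.deriv2_nonneg hβ t ht)) (sq_nonneg _)
  linarith [h.neg_deriv2_sq_div_le hβ hf' t ht]

theorem bddAbove_logAmplitude (h : IsNegativeDecayingSolution β T f f' f'') (hβ : β ≤ 0)
    (hf' : ∀ t ∈ Ici T, f' t < 0) : BddAbove (logAmplitude β f f' '' Ici T) := by
  refine ⟨_, forall_mem_image.2 fun t ht =>
    le_trans ?_ (h.antitoneOn_logAmplitude_add hβ hf' self_mem_Ici ht ht)⟩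
  have hquot : 0 ≤ f'' t / (f t * f' t) :=
    div_nonneg (h.deriv2_nonneg hβ t ht) (mul_pos_of_neg_of_neg (h.neg t ht) (hf' t ht)).le
  have hlin : 0 ≤ β / f T ^ 2 * f' t :=
    mul_nonneg_of_nonpos_of_nonpos (div_nonpos_of_nonpos_of_nonneg hβ (sq_nonneg _)) (hf' t ht).le
  linarith

theorem exists_tendsto_deriv_mul_rpow (h : IsNegativeDecayingSolution β T f f' f'') (hβ : β ≤ 0)
    (hf' : ∀ t ∈ Ici T, f' t < 0) :
    ∃ l₀ < 0, Tendsto (fun t => f' t * (-f t) ^ (-β)) atTop (𝓝 l₀) := by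
  obtain ⟨l, hl⟩ := exists_tendsto_atTop_of_monotoneOn_Ici
    (h.monotoneOn_logAmplitude hβ hf') (h.bddAbove_logAmplitude hβ hf')
  refine ⟨-Real.exp l, neg_neg_of_pos (Real.exp_pos l), hl.rexp.neg.congr' ?_⟩
  filter_upwards [eventually_ge_atTop T] with t ht
  exact neg_exp_logAmplitude (h.neg t ht) (hf' t ht)

end IsNegativeDecayingSolution

theorem stmt_14_general (β : ℝ) (hβ : β ≤ 0) (t₀ : ℝ)
    (f f' f'' f''' : ℝ → ℝ)
    (hf1 : ∀ t ∈ Ici t₀, HasDerivAt f (f' t) t)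
    (hf2 : ∀ t ∈ Ici t₀, HasDerivAt f' (f'' t) t)
    (hf3 : ∀ t ∈ Ici t₀, HasDerivAt f'' (f''' t) t)
    (heq : ∀ t ∈ Ici t₀, f''' t + f t * f'' t - β * (f' t) ^ 2 = 0)
    (hnc : ¬ ∃ c : ℝ, ∀ t ∈ Ici t₀, f t = c)
    (hlim : Tendsto f' atTop (𝓝 0))
    (hneginf : ∀ᶠ t in atTop, f t < 0) :
    ∃ l₀ < 0, Tendsto (fun t => f' t * (-f t) ^ (-β)) atTop (𝓝 l₀) := by
  have hsol : IsSimilaritySolutionOn β (Ici t₀) f f' f'' :=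
    ⟨hf1, hf2, fun t ht => (hf3 t ht).congr_deriv (by linarith [heq t ht])⟩
  obtain ⟨T, hT⟩ := eventually_atTop.1 (hneginf.and (eventually_ge_atTop t₀))
  have ht₀T : t₀ ≤ T := (hT T le_rfl).2
  have hdecay : IsNegativeDecayingSolution β T f f' f'' :=
    ⟨hsol.mono (Ici_subset_Ici.2 ht₀T), fun t ht => (hT t ht).1, hlim⟩
  exact hdecay.exists_tendsto_deriv_mul_rpow hβ
    (hdecay.deriv_neg_of_not_const hβ hsol ht₀T hnc)

/-- Let β < 0 and f be a non-constant unbounded solution of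
f''' + f·f'' − β·(f')² = 0 on [t₀, ∞) with f'(t) → 0 at infinity and f negative
at infinity.  Then f'(t)·(−f(t))^{−β} converges to a finite negative limit l₀. -/
theorem stmt_14 (β : ℝ) (hβ : β < 0) (t₀ : ℝ)
    (f f' f'' f''' : ℝ → ℝ)
    (hf1 : ∀ t ∈ Set.Ici t₀, HasDerivAt f (f' t) t)
    (hf2 : ∀ t ∈ Set.Ici t₀, HasDerivAt f' (f'' t) t)
    (hf3 : ∀ t ∈ Set.Ici t₀, HasDerivAt f'' (f''' t) t)
    (heq : ∀ t ∈ Set.Ici t₀, f''' t + f t * f'' t - β * (f' t) ^ 2 = 0)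
    (hnc : ¬ ∃ c : ℝ, ∀ t ∈ Set.Ici t₀, f t = c)
    (hunb : ¬ ∃ M : ℝ, ∀ t ∈ Set.Ici t₀, |f t| ≤ M)
    (hlim : Filter.Tendsto f' Filter.atTop (nhds 0))
    (hneginf : ∀ᶠ t in Filter.atTop, f t < 0) :
    ∃ l₀ < 0, Filter.Tendsto (fun t => f' t * (-f t) ^ (-β))
      Filter.atTop (nhds l₀) :=
  stmt_14_general β hβ.le t₀ f f' f'' f''' hf1 hf2 hf3 heq hnc hlim hneginf
end
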